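/- arXiv:2104.14001 — 2 statements merged into one kernel-verified Lean document; each statement's English description precedes it below -/
import Mathlib

section
/- Let ψ_0,…,ψ_{r−1}, f_1,…,f_n, and g_{j,i} (1 ≤ j ≤ n, 1 ≤ i ≤ m) be real polynomials in n variables, let k > 0, and define p := Σ_{j=1}^n (∂ψ_{r−1}/∂x_j)·f_j + k·ψ_{r−1} and q_i := Σ_{j=1}^n (∂ψ_{r−1}/∂x_j)·g_{j,i}. Suppose there exist polynomials θ_1,…,θ_m, sum-of-squares polynomials α_0, α_1, γ_0,…,γ_{r−1}, and a positive integer s such that the polynomial identity α_0 − α_1·p + Σ_{i=1}^m θ_i·q_i + Σ_{i=0}^{r−1} γ_i·ψ_i + p^{2s} = 0 holds. Then there is no x ∈ ℝ^n satisfying ψ_i(x) ≥ 0 for all i = 0,…,r−1, q_i(x) = 0 for all i = 1,…,m, and p(x) < 0; consequently, for every x with ψ_i(x) ≥ 0 for all i = 0,…,r−1 there exists u ∈ ℝ^m with p(x) + Σ_{i=1}^m q_i(x)·u_i ≥ 0. -/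
open MvPolynomial

/-- A multivariate real polynomial is a sum of squares. -/
def IsSOS {n : ℕ} (p : MvPolynomial (Fin n) ℝ) : Prop :=
  ∃ (k : ℕ) (g : Fin k → MvPolynomial (Fin n) ℝ), p = ∑ i, (g i) ^ 2

theorem IsSOS.isSumSq {n : ℕ} {p : MvPolynomial (Fin n) ℝ} (hp : IsSOS p) : IsSumSq p := by
  obtain ⟨k, g, rfl⟩ := hp
  exact IsSumSq.sum_sq Finset.univ g

theorem isSumSq_map {A B : Type*} [NonAssocSemiring A] [NonAssocSemiring B] (φ : A →+* B) {a : A}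
    (ha : IsSumSq a) : IsSumSq (φ a) := by
  induction ha with
  | zero => simpa only [map_zero] using IsSumSq.zero
  | sq_add b _ ih => simpa only [map_add, map_mul] using ih.sq_add (φ b)

section OrderedRing

variable {R : Type*} [CommRing R] [LinearOrder R] [IsStrictOrderedRing R]

theorem nonneg_of_sub_mul_add_even_pow_eq_zero {a b c : R} {d : ℕ} (ha : 0 ≤ a) (hb : 0 ≤ b)
    (hd : Even d) (h : a - b * c + c ^ d = 0) : 0 ≤ c := by
  by_contra! hc
  have hbc : b * c ≤ 0 := mul_nonpos_of_nonneg_of_nonpos hb hc.le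
  have hcd : 0 < c ^ d := hd.pow_pos hc.ne
  linarith

theorem map_nonneg_of_sos_certificate {A ι κ : Type*} [CommRing A] [Fintype ι] [Fintype κ]
    (φ : A →+* R) {p α₀ α₁ : A} {q θ : ι → A} {ψ γ : κ → A} {s : ℕ}
    (hα₀ : IsSumSq α₀) (hα₁ : IsSumSq α₁) (hγ : ∀ i, IsSumSq (γ i))
    (hid : α₀ - α₁ * p + ∑ i, θ i * q i + ∑ i, γ i * ψ i + p ^ (2 * s) = 0)
    (hψ : ∀ i, 0 ≤ φ (ψ i)) (hq : ∀ i, φ (q i) = 0) : 0 ≤ φ p := by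
  have hγψ : 0 ≤ ∑ i, φ (γ i) * φ (ψ i) :=
    Finset.sum_nonneg fun i _ => mul_nonneg (isSumSq_map φ (hγ i)).nonneg (hψ i)
  have hid_map : φ α₀ - φ α₁ * φ p + ∑ i, φ (γ i) * φ (ψ i) + φ p ^ (2 * s) = 0 := by
    simpa [hq] using congrArg φ hid
  refine nonneg_of_sub_mul_add_even_pow_eq_zero
    (add_nonneg (isSumSq_map φ hα₀).nonneg hγψ) (isSumSq_map φ hα₁).nonneg
    (even_two_mul s) ?_
  rwa [add_sub_right_comm]

end OrderedRing

theorem exists_nonneg_add_sum_mul {K ι : Type*} [DivisionRing K] [Preorder K] [Fintype ι]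
    {a : K} {b : ι → K} (h : (∀ i, b i = 0) → 0 ≤ a) :
    ∃ u : ι → K, 0 ≤ a + ∑ i, b i * u i := by
  classical
  by_cases hb : ∀ i, b i = 0
  · exact ⟨0, by simpa using h hb⟩
  · obtain ⟨i, hi⟩ := not_forall.mp hb
    have hsum : ∑ j, b j * Pi.single (M := fun _ => K) i ((b i)⁻¹ * -a) j = -a := by
      simp [Pi.single_apply, mul_inv_cancel_left₀ hi]
    exact ⟨Pi.single i ((b i)⁻¹ * -a), by rw [hsum, add_neg_cancel]⟩

theorem hocbf_sos_certificate_sound_general {K σ ι κ : Type*}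
    [Field K] [LinearOrder K] [IsStrictOrderedRing K] [Fintype ι] [Fintype κ]
    {p α₀ α₁ : MvPolynomial σ K} {q θ : ι → MvPolynomial σ K} {ψ γ : κ → MvPolynomial σ K} {s : ℕ}
    (hα₀ : IsSumSq α₀) (hα₁ : IsSumSq α₁) (hγ : ∀ i, IsSumSq (γ i))
    (hid : α₀ - α₁ * p + ∑ i, θ i * q i + ∑ i, γ i * ψ i + p ^ (2 * s) = 0) :
    (¬ ∃ x : σ → K, (∀ i, 0 ≤ eval x (ψ i)) ∧ (∀ i, eval x (q i) = 0) ∧ eval x p < 0) ∧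
      (∀ x : σ → K, (∀ i, 0 ≤ eval x (ψ i)) →
        ∃ u : ι → K, 0 ≤ eval x p + ∑ i, eval x (q i) * u i) := by
  have eval_p_nonneg (x : σ → K) (hψ : ∀ i, 0 ≤ eval x (ψ i)) (hq : ∀ i, eval x (q i) = 0) :
      0 ≤ eval x p :=
    map_nonneg_of_sos_certificate (eval x) hα₀ hα₁ hγ hid hψ hq
  constructor
  · rintro ⟨x, hψ, hq, hp⟩
    exact hp.not_ge (eval_p_nonneg x hψ hq)
  · exact fun x hψ => exists_nonneg_add_sum_mul (eval_p_nonneg x hψ)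

/-- Theorem 4, soundness direction of the SOS certificate (5) for HOCBF verification.
Here `r = rm + 1`, so `ψ : Fin (rm + 1)` stands for `ψ_0, …, ψ_{r-1}`, and
`ψ (Fin.last rm)` is `ψ_{r-1}`. -/
theorem hocbf_sos_certificate_sound
    (n m rm : ℕ)
    (ψ : Fin (rm + 1) → MvPolynomial (Fin n) ℝ)
    (f : Fin n → MvPolynomial (Fin n) ℝ)
    (g : Fin n → Fin m → MvPolynomial (Fin n) ℝ)
    (k : ℝ) (hk : 0 < k)
    (p : MvPolynomial (Fin n) ℝ)
    (hp : p = ∑ j, pderiv j (ψ (Fin.last rm)) * f j + C k * ψ (Fin.last rm))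
    (q : Fin m → MvPolynomial (Fin n) ℝ)
    (hq : ∀ i, q i = ∑ j, pderiv j (ψ (Fin.last rm)) * g j i)
    (θ : Fin m → MvPolynomial (Fin n) ℝ)
    (α₀ α₁ : MvPolynomial (Fin n) ℝ) (hα₀ : IsSOS α₀) (hα₁ : IsSOS α₁)
    (γ : Fin (rm + 1) → MvPolynomial (Fin n) ℝ) (hγ : ∀ i, IsSOS (γ i))
    (s : ℕ) (hs : 0 < s)
    (hid : α₀ - α₁ * p + ∑ i, θ i * q i + ∑ i, γ i * ψ i + p ^ (2 * s) = 0) :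
    (¬ ∃ x : Fin n → ℝ,
        (∀ i, 0 ≤ eval x (ψ i)) ∧ (∀ i, eval x (q i) = 0) ∧ eval x p < 0) ∧
      (∀ x : Fin n → ℝ, (∀ i, 0 ≤ eval x (ψ i)) →
        ∃ u : Fin m → ℝ, 0 ≤ eval x p + ∑ i, eval x (q i) * u i) :=
  hocbf_sos_certificate_sound_general hα₀.isSumSq hα₁.isSumSq (fun i => (hγ i).isSumSq) hid
end

section
/- Let ψ_0,…,ψ_{r−1}, f_1,…,f_n, and g_{j,i} (1 ≤ j ≤ n, 1 ≤ i ≤ m) be real polynomials in n variables, let k > 0, and define p := Σ_{j=1}^n (∂ψ_{r−1}/∂x_j)·f_j + k·ψ_{r−1} and q_i := Σ_{j=1}^n (∂ψ_{r−1}/∂x_j)·g_{j,i}. Suppose there exist polynomials θ_1,…,θ_m, sum-of-squares polynomials α, γ_0,…,γ_{r−1}, Λ, and a real number ρ ≤ 0 such that the polynomial α·p + Σ_{i=1}^m θ_i·q_i − Σ_{i=0}^{r−1} γ_i·ψ_i + ρ·Λ − 1 is a sum of squares. Then there is no x ∈ ℝ^n satisfying ψ_i(x) ≥ 0 for all i =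 0,…,r−1, q_i(x) = 0 for all i = 1,…,m, and p(x) ≤ 0; consequently, for every x ∈ ∩_{i=0}^{r−1}{ψ_i ≥ 0} there exists u ∈ ℝ^m with p(x) + Σ_{i=1}^m q_i(x)·u_i ≥ 0. -/
open MvPolynomial

theorem IsSOS.eval_nonneg {n : ℕ} {p : MvPolynomial (Fin n) ℝ} (hp : IsSOS p) (x : Fin n → ℝ) :
    0 ≤ eval x p := by
  obtain ⟨k, g, rfl⟩ := hp
  simp only [map_sum, map_pow]
  exact Finset.sum_nonneg fun i _ => sq_nonneg (eval x (g i))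

theorem eval_pos_of_certificate_nonneg {R σ ι κ : Type*} [CommRing R] [LinearOrder R]
    [IsStrictOrderedRing R] [Fintype ι] [Fintype κ] {α p Λ : MvPolynomial σ R}
    {θ q : ι → MvPolynomial σ R} {γ ψ : κ → MvPolynomial σ R} {ρ : R} {x : σ → R}
    (hα : 0 ≤ eval x α) (hγ : ∀ i, 0 ≤ eval x (γ i)) (hΛ : 0 ≤ eval x Λ) (hρ : ρ ≤ 0)
    (hcert : 0 ≤ eval x (α * p + ∑ i, θ i * q i - ∑ i, γ i * ψ i + C ρ * Λ - 1))
    (hψ : ∀ i, 0 ≤ eval x (ψ i)) (hq : ∀ i, eval x (q i) = 0) : 0 < eval x p := by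
  have hγψ : 0 ≤ ∑ i, eval x (γ i) * eval x (ψ i) :=
    Finset.sum_nonneg fun i _ => mul_nonneg (hγ i) (hψ i)
  have hρΛ : ρ * eval x Λ ≤ 0 := mul_nonpos_of_nonpos_of_nonneg hρ hΛ
  simp only [map_sub, map_add, map_mul, map_sum, map_one, eval_C, hq, mul_zero,
    Finset.sum_const_zero, add_zero] at hcert
  have hαp : 0 < eval x α * eval x p := by linarith
  exact pos_of_mul_pos_right hαp hα

theorem exists_nonneg_add_sum_mul_iff {K ι : Type*} [Field K] [LinearOrder K]
    [IsStrictOrderedRing K] [Fintype ι] {a : K} {b : ι → K} :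
    (∃ u : ι → K, 0 ≤ a + ∑ i, b i * u i) ↔ ((∀ i, b i = 0) → 0 ≤ a) := by
  classical
  constructor
  · rintro ⟨u, hu⟩ hb
    simpa [hb] using hu
  · intro ha
    by_cases hb : ∀ i, b i = 0
    · exact ⟨0, by simpa using ha hb⟩
    · obtain ⟨i, hi⟩ := not_forall.mp hb
      have hsum : ∑ j, b j * (Pi.single i (-a / b i) : ι → K) j = -a :=
        (dotProduct_single b (-a / b i) i).trans (mul_div_cancel₀ (-a) hi)
      exact ⟨Pi.single i (-a / b i), by rw [hsum, add_neg_cancel]⟩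

/-- Theorem 7: the first SOS constraint of program (11) with `ρ ≤ 0` certifies
HOCBF feasibility throughout `∩_i C_i`. Here `r = rm + 1`, so `ψ : Fin (rm + 1)`
stands for `ψ_0, …, ψ_{r-1}` and `ψ (Fin.last rm)` is `ψ_{r-1}`. -/
theorem hocbf_synthesis_first_constraint_feasible
    (n m rm : ℕ)
    (ψ : Fin (rm + 1) → MvPolynomial (Fin n) ℝ)
    (f : Fin n → MvPolynomial (Fin n) ℝ)
    (g : Fin n → Fin m → MvPolynomial (Fin n) ℝ)
    (k : ℝ) (hk : 0 < k)
    (p : MvPolynomial (Fin n) ℝ)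
    (hp : p = ∑ j, pderiv j (ψ (Fin.last rm)) * f j + C k * ψ (Fin.last rm))
    (q : Fin m → MvPolynomial (Fin n) ℝ)
    (hq : ∀ i, q i = ∑ j, pderiv j (ψ (Fin.last rm)) * g j i)
    (θ : Fin m → MvPolynomial (Fin n) ℝ)
    (α Λ : MvPolynomial (Fin n) ℝ) (hα : IsSOS α) (hΛ : IsSOS Λ)
    (γ : Fin (rm + 1) → MvPolynomial (Fin n) ℝ) (hγ : ∀ i, IsSOS (γ i))
    (ρ : ℝ) (hρ : ρ ≤ 0)
    (hcert : IsSOS (α * p + ∑ i, θ i * q i - ∑ i, γ i * ψ i + C ρ * Λ - 1)) :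
    (¬ ∃ x : Fin n → ℝ,
        (∀ i, 0 ≤ eval x (ψ i)) ∧ (∀ i, eval x (q i) = 0) ∧ eval x p ≤ 0) ∧
      (∀ x : Fin n → ℝ, (∀ i, 0 ≤ eval x (ψ i)) →
        ∃ u : Fin m → ℝ, 0 ≤ eval x p + ∑ i, eval x (q i) * u i) := by
  have eval_p_pos (x : Fin n → ℝ) (hψ : ∀ i, 0 ≤ eval x (ψ i)) (hq₀ : ∀ i, eval x (q i) = 0) :
      0 < eval x p :=
    eval_pos_of_certificate_nonneg (hα.eval_nonneg x) (fun i => (hγ i).eval_nonneg x)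
      (hΛ.eval_nonneg x) hρ (hcert.eval_nonneg x) hψ hq₀
  constructor
  · rintro ⟨x, hψ, hq₀, hp₀⟩
    exact hp₀.not_gt (eval_p_pos x hψ hq₀)
  · intro x hψ
    exact exists_nonneg_add_sum_mul_iff.mpr fun hq₀ => (eval_p_pos x hψ hq₀).le
end
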